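/- arXiv:1902.03505 — 3 statements merged into one kernel-verified Lean document; each statement's English description precedes it below -/
import Mathlib

section
/- Fix integers N, d ≥ 2. For each p ∈ (0,∞) let X^(p) ∈ S(N,d) be a configuration attaining F_{p,N,d}. If X ∈ S(N,d) is the limit of a subsequence X^(p_k) with p_k → ∞ as k → ∞, then X minimizes the coherence: c(X) = F_{∞,N,d}. -/
open scoped RealInnerProductSpace
open Real

/-- The `p`-frame potential `FP_{p,N,d}(X) = Σ_{k≠ℓ} |⟨x_k,x_ℓ⟩|^p`. -/
noncomputable def framePotential (d N : ℕ) (p : ℝ)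
    (X : Fin N → EuclideanSpace ℝ (Fin d)) : ℝ :=
  ∑ k : Fin N, ∑ l : Fin N, if k ≠ l then |⟪X k, X l⟫| ^ p else 0

/-- The coherence `c(X) = max_{k≠ℓ} |⟨x_k,x_ℓ⟩|`. -/
noncomputable def coherence (d N : ℕ) (X : Fin N → EuclideanSpace ℝ (Fin d)) : ℝ :=
  sSup {v | ∃ k l : Fin N, k ≠ l ∧ v = |⟪X k, X l⟫|}

/-- `F_{∞,N,d}`, the minimal coherence over `S(N,d)`. -/
noncomputable def minCoherence (d N : ℕ) : ℝ :=
  sInf (coherence d N '' {X | ∀ i, ‖X i‖ = 1})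

/-!
The `p`-frame potential is the `p`-th power of an `ℓ^p` norm over the `M = N (N - 1)` ordered pairs,
so `FP_p(X)^(1/p)` lies between `|⟨x_k, x_ℓ⟩|`, for any single pair, and `M^(1/p) c(X)`. Comparing
the minimizer `X^(p)` with a competitor `Y` therefore gives `|⟨x_k^(p), x_ℓ^(p)⟩| ≤ M^(1/p) c(Y)`,
and `M^(1/p) → 1`. Fixing the pair before letting `p → ∞` makes continuity of the inner product
enough to pass to the limit.
-/

open Filter Finset Topology

theorem le_of_frequently_rpow_le_mul_rpow {ι : Type*} {l : Filter ι} {x p : ι → ℝ} {a C M : ℝ}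
    (hx : Tendsto x l (𝓝 a)) (hp : Tendsto p l atTop) (hx0 : ∀ i, 0 ≤ x i) (hC : 0 ≤ C)
    (hM : 0 < M) (h : ∃ᶠ i in l, x i ^ p i ≤ M * C ^ p i) : a ≤ C := by
  have root_tendsto : Tendsto (fun i ↦ M ^ (p i)⁻¹ * C) l (𝓝 C) := by
    simpa using (tendsto_const_nhds.rpow (tendsto_inv_atTop_zero.comp hp) (.inl hM.ne')).mul_const C
  have le_root : ∃ᶠ i in l, x i ≤ M ^ (p i)⁻¹ * C := by
    refine (h.and_eventually (hp.eventually_gt_atTop 0)).mono fun i ⟨hi, hpi⟩ ↦ ?_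
    calc x i ≤ (M * C ^ p i) ^ (p i)⁻¹ :=
          (le_rpow_inv_iff_of_pos (hx0 i) (by positivity) hpi).2 hi
      _ = M ^ (p i)⁻¹ * C := by
          rw [mul_rpow hM.le (rpow_nonneg hC _), rpow_rpow_inv hC hpi.ne']
  exact le_of_tendsto_of_tendsto_of_frequently hx root_tendsto le_root

section Configuration

variable {d N : ℕ} {X : Fin N → EuclideanSpace ℝ (Fin d)}

theorem coherence_nonneg : 0 ≤ coherence d N X := by
  apply Real.sSup_nonneg
  rintro _ ⟨k, l, -, rfl⟩
  exact abs_nonneg _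

theorem abs_inner_le_coherence {k l : Fin N} (hkl : k ≠ l) : |⟪X k, X l⟫| ≤ coherence d N X := by
  refine le_csSup (Set.Finite.bddAbove ?_) ⟨k, l, hkl, rfl⟩
  refine (Set.finite_range fun q : Fin N × Fin N ↦ |⟪X q.1, X q.2⟫|).subset ?_
  rintro _ ⟨i, j, -, rfl⟩
  exact ⟨(i, j), rfl⟩

theorem coherence_le (hN : 2 ≤ N) {C : ℝ} (h : ∀ k l, k ≠ l → |⟪X k, X l⟫| ≤ C) :
    coherence d N X ≤ C := by
  have : Nontrivial (Fin N) := Fin.nontrivial_iff_two_le.2 hN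
  obtain ⟨i, j, hij⟩ := exists_pair_ne (Fin N)
  refine csSup_le ⟨_, i, j, hij, rfl⟩ ?_
  rintro _ ⟨k, l, hkl, rfl⟩
  exact h k l hkl

theorem framePotential_eq_sum_offDiag (p : ℝ) :
    framePotential d N p X = ∑ q ∈ (univ : Finset (Fin N)).offDiag, |⟪X q.1, X q.2⟫| ^ p := by
  rw [framePotential, ← sum_product', ← sum_filter]
  congr 1
  ext
  simp

theorem abs_inner_rpow_le_framePotential (p : ℝ) {k l : Fin N} (hkl : k ≠ l) :
    |⟪X k, X l⟫| ^ p ≤ framePotential d N p X := by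
  rw [framePotential_eq_sum_offDiag]
  exact single_le_sum (f := fun q : Fin N × Fin N ↦ |⟪X q.1, X q.2⟫| ^ p) (a := (k, l))
    (fun q _ ↦ by positivity) (by simpa using hkl)

theorem framePotential_le_mul_coherence_rpow {p : ℝ} (hp : 0 ≤ p) :
    framePotential d N p X ≤ N * (N - 1) * coherence d N X ^ p := by
  have card_pairs : (#(univ : Finset (Fin N)).offDiag : ℝ) = N * (N - 1) := by
    rw [offDiag_card, Nat.cast_sub (Nat.le_mul_self _)]
    simp [mul_sub]
  rw [framePotential_eq_sum_offDiag, ← card_pairs, ← nsmul_eq_mul]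
  refine sum_le_card_nsmul _ _ _ fun q hq ↦ ?_
  exact rpow_le_rpow (abs_nonneg _) (abs_inner_le_coherence (mem_offDiag.1 hq).2.2) hp

end Configuration

section Limit

variable {d N : ℕ} {ι : Type*} {f : Filter ι} {p : ι → ℝ}
  {X : ι → Fin N → EuclideanSpace ℝ (Fin d)} {X₀ : Fin N → EuclideanSpace ℝ (Fin d)}

theorem coherence_le_of_frequently_framePotential_le (hN : 2 ≤ N)
    (hp : Tendsto p f atTop) (hX : Tendsto X f (𝓝 X₀)) {Y : Fin N → EuclideanSpace ℝ (Fin d)}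
    (h : ∃ᶠ i in f, framePotential d N (p i) (X i) ≤ framePotential d N (p i) Y) :
    coherence d N X₀ ≤ coherence d N Y := by
  refine coherence_le hN fun k l hkl ↦ ?_
  have inner_tendsto : Tendsto (fun i ↦ |⟪X i k, X i l⟫|) f (𝓝 |⟪X₀ k, X₀ l⟫|) :=
    ((hX.apply_nhds k).inner (hX.apply_nhds l)).abs
  have pairs_pos : (0 : ℝ) < N * (N - 1) := by
    have : (2 : ℝ) ≤ N := mod_cast hN
    exact mul_pos (by linarith) (by linarith)
  refine le_of_frequently_rpow_le_mul_rpow inner_tendsto hp (fun _ ↦ abs_nonneg _)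
    coherence_nonneg pairs_pos ?_
  refine (h.and_eventually (hp.eventually_ge_atTop 0)).mono fun i ⟨hi, hpi⟩ ↦ ?_
  calc |⟪X i k, X i l⟫| ^ p i ≤ framePotential d N (p i) (X i) :=
        abs_inner_rpow_le_framePotential _ hkl
    _ ≤ framePotential d N (p i) Y := hi
    _ ≤ N * (N - 1) * coherence d N Y ^ p i := framePotential_le_mul_coherence_rpow hpi

theorem cluster_point_of_minimizers_minimizes_coherence_general (hN : 2 ≤ N)
    {K : Set (Fin N → EuclideanSpace ℝ (Fin d))}
    (hXmin : ∃ᶠ i in f, IsMinOn (framePotential d N (p i)) K (X i))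
    (hp : Tendsto p f atTop) (hX₀ : X₀ ∈ K) (hX : Tendsto X f (𝓝 X₀)) :
    IsLeast (coherence d N '' K) (coherence d N X₀) := by
  refine ⟨Set.mem_image_of_mem _ hX₀, ?_⟩
  rintro _ ⟨Y, hY, rfl⟩
  exact coherence_le_of_frequently_framePotential_le hN hp hX
    (hXmin.mono fun i hi ↦ isMinOn_iff.1 hi Y hY)

end Limit

/-- If `X^(p)` is an optimal configuration of the `p`-frame potential for every `p ∈ (0,∞)`
and `X₀ ∈ S(N,d)` is the limit of a subsequence `X^(p_k)` with `p_k → ∞`, then `X₀`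
minimizes the coherence. -/
theorem cluster_point_of_minimizers_minimizes_coherence
    (d N : ℕ) (hd : 2 ≤ d) (hN : 2 ≤ N)
    (X : ℝ → Fin N → EuclideanSpace ℝ (Fin d))
    (hXunit : ∀ p : ℝ, 0 < p → ∀ i, ‖X p i‖ = 1)
    (hXmin : ∀ p : ℝ, 0 < p → ∀ Y : Fin N → EuclideanSpace ℝ (Fin d),
      (∀ i, ‖Y i‖ = 1) → framePotential d N p (X p) ≤ framePotential d N p Y)
    (pk : ℕ → ℝ) (hpk0 : ∀ k, 0 < pk k)
    (hpk : Filter.Tendsto pk Filter.atTop Filter.atTop)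
    (X0 : Fin N → EuclideanSpace ℝ (Fin d)) (hX0unit : ∀ i, ‖X0 i‖ = 1)
    (hX0 : Filter.Tendsto (fun k => X (pk k)) Filter.atTop (nhds X0)) :
    coherence d N X0 = minCoherence d N := by
  have hmin (k : ℕ) : IsMinOn (framePotential d N (pk k)) {Y | ∀ i, ‖Y i‖ = 1} (X (pk k)) :=
    isMinOn_iff.2 (hXmin (pk k) (hpk0 k))
  exact (cluster_point_of_minimizers_minimizes_coherence_general hN (.of_forall hmin) hpk
    hX0unit hX0).csInf_eq.symm
end

section
/- Fix an integer d ≥ 2 and p ∈ (0,∞). The sequence N ↦ F_{p,N,d} / (N(N−1)), defined for N ≥ d+1, is non-decreasing: for every N ≥ d+2, F_{p,N−1,d} / ((N−1)(N−2)) ≤ F_{p,N,d} / (N(N−1)). -/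
open scoped RealInnerProductSpace
open Real

/-- `F_{p,N,d}`, the minimum of the `p`-frame potential over `S(N,d)`. -/
noncomputable def minFramePotential (d N : ℕ) (p : ℝ) : ℝ :=
  sInf (framePotential d N p '' {X | ∀ i, ‖X i‖ = 1})

/-!
Delete one vector at a time from a configuration of `N` vectors. Each ordered pair survives `N - 2`
of the `N` deletions, so the potentials of the `N` subconfigurations add up to `(N - 2) FP(X)`,
while each of them is at least the minimum for `N - 1` vectors.
-/

section PairEnergy

variable {α : Type*} {n : ℕ}

/-- The energy of a configuration `X` of `n` points under the pair interaction `K`, summed over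
ordered pairs of distinct indices. The points themselves may coincide, so the diagonal values of
`K` can contribute. -/
noncomputable def pairEnergy (K : α → α → ℝ) (X : Fin n → α) : ℝ :=
  ∑ k : Fin n, ∑ l : Fin n, if k ≠ l then K (X k) (X l) else 0

/-- The infimum of the energies of `n` points of `S`, taken in `ℝ`: it is `0` when `S` admits
no configuration or the energies are unbounded below. -/
noncomputable def infPairEnergy (K : α → α → ℝ) (S : Set α) (n : ℕ) : ℝ :=
  sInf (pairEnergy K '' {X : Fin n → α | ∀ i, X i ∈ S})

theorem sum_succAbove_eq_sub {M : Type*} [AddCommGroup M] (f : Fin (n + 1) → M)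
    (i : Fin (n + 1)) : ∑ k, f (i.succAbove k) = (∑ k, f k) - f i :=
  eq_sub_of_add_eq' (Fin.sum_univ_succAbove f i).symm

theorem sum_sum_succAbove_of_diag_eq_zero {R : Type*} [CommRing R]
    {g : Fin (n + 1) → Fin (n + 1) → R} (hg : ∀ i, g i i = 0) :
    ∑ i : Fin (n + 1), ∑ k, ∑ l, g (i.succAbove k) (i.succAbove l) =
      ((n : R) - 1) * ∑ k, ∑ l, g k l := by
  have delete_row_col (i : Fin (n + 1)) :
      ∑ k, ∑ l, g (i.succAbove k) (i.succAbove l) =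
        (∑ k, ∑ l, g k l) - (∑ l, g i l) - ∑ k, g k i := by
    simp only [sum_succAbove_eq_sub (g _), Finset.sum_sub_distrib,
      sum_succAbove_eq_sub (fun k => ∑ l, g k l), sum_succAbove_eq_sub (fun k => g k i), hg,
      sub_zero]
  simp only [delete_row_col, Finset.sum_sub_distrib]
  rw [Finset.sum_comm (f := fun i k => g k i), Fin.sum_const, nsmul_eq_mul]
  push_cast
  ring

theorem sum_pairEnergy_removeNth (K : α → α → ℝ) (X : Fin (n + 1) → α) :
    ∑ i : Fin (n + 1), pairEnergy K (i.removeNth X) = ((n : ℝ) - 1) * pairEnergy K X := by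
  simpa only [pairEnergy, Fin.removeNth_apply, ne_eq, Fin.succAbove_right_inj] using
    sum_sum_succAbove_of_diag_eq_zero (g := fun k l => if k ≠ l then K (X k) (X l) else 0)
      fun _ => if_neg (not_not.2 rfl)

theorem pairEnergy_nonneg {K : α → α → ℝ} (hK : ∀ x y, 0 ≤ K x y) (X : Fin n → α) :
    0 ≤ pairEnergy K X :=
  Finset.sum_nonneg fun _ _ => Finset.sum_nonneg fun _ _ => ite_nonneg (hK _ _) le_rfl

variable {K : α → α → ℝ} {S : Set α}

theorem succ_mul_infPairEnergy_le
    (hbdd : BddBelow (pairEnergy K '' {X : Fin n → α | ∀ i, X i ∈ S}))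
    {X : Fin (n + 1) → α} (hX : ∀ i, X i ∈ S) :
    ((n : ℝ) + 1) * infPairEnergy K S n ≤ ((n : ℝ) - 1) * pairEnergy K X := by
  calc ((n : ℝ) + 1) * infPairEnergy K S n
      = ∑ _i : Fin (n + 1), infPairEnergy K S n := by
        rw [Fin.sum_const, nsmul_eq_mul, Nat.cast_succ]
    _ ≤ ∑ i : Fin (n + 1), pairEnergy K (i.removeNth X) :=
        Finset.sum_le_sum fun i _ =>
          csInf_le hbdd (Set.mem_image_of_mem _ fun k => hX (i.succAbove k))
    _ = ((n : ℝ) - 1) * pairEnergy K X := sum_pairEnergy_removeNth K X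

theorem infPairEnergy_div_le_succ (hS : S.Nonempty) (hn : 2 ≤ n)
    (hbdd : BddBelow (pairEnergy K '' {X : Fin n → α | ∀ i, X i ∈ S})) :
    infPairEnergy K S n / ((n : ℝ) * ((n : ℝ) - 1)) ≤
      infPairEnergy K S (n + 1) / (((n : ℝ) + 1) * (n : ℝ)) := by
  have hn' : (2 : ℝ) ≤ n := by exact_mod_cast hn
  have : (0 : ℝ) < n := by linarith
  have hpred : (0 : ℝ) < (n : ℝ) - 1 := by linarith
  obtain ⟨x, hx⟩ := hS
  rw [le_div_iff₀ (by positivity)]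
  refine le_csInf ⟨_, fun _ => x, fun _ => hx, rfl⟩ ?_
  rintro _ ⟨X, hX, rfl⟩
  calc infPairEnergy K S n / ((n : ℝ) * ((n : ℝ) - 1)) * (((n : ℝ) + 1) * n)
      = ((n : ℝ) + 1) * infPairEnergy K S n / ((n : ℝ) - 1) := by field_simp
    _ ≤ pairEnergy K X := (div_le_iff₀' hpred).2 (succ_mul_infPairEnergy_le hbdd hX)

end PairEnergy

theorem minFramePotential_eq_infPairEnergy (d N : ℕ) (p : ℝ) :
    minFramePotential d N p =
      infPairEnergy (fun x y : EuclideanSpace ℝ (Fin d) => |⟪x, y⟫| ^ p) {x | ‖x‖ = 1} N :=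
  rfl

/-- For `p < 0` an orthogonal pair contributes `0 ^ p = 0` to the potential. -/
theorem minFramePotential_div_monotone_general
    (d : ℕ) (hd : d ≠ 0) (p : ℝ) (N : ℕ) (hN : 3 ≤ N) :
    minFramePotential d (N - 1) p / (((N : ℝ) - 1) * ((N : ℝ) - 2)) ≤
      minFramePotential d N p / ((N : ℝ) * ((N : ℝ) - 1)) := by
  obtain ⟨n, rfl⟩ : ∃ n, N = n + 1 := ⟨N - 1, by omega⟩
  have : NeZero d := ⟨hd⟩
  have sphere_nonempty : {x : EuclideanSpace ℝ (Fin d) | ‖x‖ = 1}.Nonempty :=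
    exists_norm_eq _ zero_le_one
  have cast_pred : ((n + 1 : ℕ) : ℝ) - 1 = n := by rw [Nat.cast_succ, add_sub_cancel_right]
  have cast_pred_pred : ((n + 1 : ℕ) : ℝ) - 2 = (n : ℝ) - 1 := by push_cast; ring
  rw [cast_pred, cast_pred_pred, Nat.cast_succ, Nat.add_sub_cancel,
    minFramePotential_eq_infPairEnergy, minFramePotential_eq_infPairEnergy]
  refine infPairEnergy_div_le_succ sphere_nonempty (by omega) ⟨0, ?_⟩
  rintro _ ⟨X, -, rfl⟩
  exact pairEnergy_nonneg (fun _ _ => by positivity) X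

/-- The sequence `N ↦ F_{p,N,d}/(N(N−1))` is non-decreasing for `N ≥ d+1`. -/
theorem minFramePotential_div_monotone
    (d : ℕ) (hd : 2 ≤ d) (p : ℝ) (hp : 0 < p) (N : ℕ) (hN : d + 2 ≤ N) :
    minFramePotential d (N - 1) p / (((N : ℝ) - 1) * ((N : ℝ) - 2)) ≤
      minFramePotential d N p / ((N : ℝ) * ((N : ℝ) - 1)) := by
  exact minFramePotential_div_monotone_general d (by omega) p N (by omega)
end

section
/- Let p ≥ 2 be an even integer and d = 2. Then lim_{N→∞} F_{p,N,2}/N² = P_{p,2} = (1·3·5⋯(p−1)) / (2·4·6⋯p). -/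
open scoped RealInnerProductSpace
open Real MeasureTheory

/-- The probabilistic `p`-frame potential of a measure `μ` on the unit sphere `S^{d-1}`:
`PFP_{p,d}(μ) = ∫∫ |⟨x,y⟩|^p dμ(x)dμ(y)`. -/
noncomputable def probFramePotential (d : ℕ) (p : ℝ)
    (μ : Measure (Metric.sphere (0 : EuclideanSpace ℝ (Fin d)) 1)) : ℝ :=
  ∫ x, ∫ y, |⟪(x : EuclideanSpace ℝ (Fin d)), (y : EuclideanSpace ℝ (Fin d))⟫| ^ p ∂μ ∂μ

/-- `P_{p,d}`, the minimum of the probabilistic `p`-frame potential over all Borel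
probability measures on the unit sphere `S^{d-1}`. -/
noncomputable def minProbFramePotential (d : ℕ) (p : ℝ) : ℝ :=
  sInf {v | ∃ μ : Measure (Metric.sphere (0 : EuclideanSpace ℝ (Fin d)) 1),
    IsProbabilityMeasure μ ∧ v = probFramePotential d p μ}

/-!
On the unit circle `⟨x, y⟩` is the cosine of the angle between `x` and `y`, so the Fourier
expansion of `cos ^ (2 * m)`, whose coefficients are nonnegative, writes the potential of a
probability measure as a nonnegative combination of the squared moduli of its even trigonometric
moments of order at most `2 * m`. The moment of order `0` alone contributes
`centralBinom m / 4 ^ m`, and the others vanish for the empirical measure of the points at angles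
`π i / N` as soon as `m < N`. The `N`-point potential is `N ^ 2` times the potential of the
empirical measure, minus the diagonal `N`, so its minimum is exactly
`centralBinom m / 4 ^ m * N ^ 2 - N` for `N > m`.
-/

theorem centralBinom_div_four_pow_eq_prod (m : ℕ) :
    (m.centralBinom : ℝ) / 4 ^ m =
      ∏ i ∈ Finset.range m, ((2 * (i : ℝ) + 1) / (2 * (i : ℝ) + 2)) := by
  induction m with
  | zero => simp
  | succ n ih =>
    have hrec : ((n : ℝ) + 1) * (n + 1).centralBinom = 2 * (2 * n + 1) * n.centralBinom := by
      exact_mod_cast Nat.succ_mul_centralBinom_succ n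
    rw [Finset.prod_range_succ, ← ih, pow_succ]
    field_simp
    linear_combination 2 * hrec

theorem sum_zpow_pow_eq_zero_of_isPrimitiveRoot {K : Type*} [Field K] {ζ : K} {N : ℕ} {n : ℤ}
    (hζ : IsPrimitiveRoot ζ N) (hn : ¬ (N : ℤ) ∣ n) :
    ∑ i ∈ Finset.range N, (ζ ^ n) ^ i = 0 := by
  have hne : ζ ^ n ≠ 1 := mt (hζ.zpow_eq_one_iff_dvd n).1 hn
  have hpow : (ζ ^ n) ^ N = 1 := by
    rw [← zpow_natCast, zpow_comm, zpow_natCast, hζ.pow_eq_one, one_zpow]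
  rw [geom_sum_eq hne, hpow, sub_self, zero_div]

section EmpiricalMeasure

variable {α : Type*} [MeasurableSpace α] {N : ℕ}

/-- The empirical measure of `N` points: the uniform probability measure on them, counted with
multiplicity. For `N = 0` it is the zero measure. -/
noncomputable def empiricalMeasure (x : Fin N → α) : Measure α :=
  (N : ENNReal)⁻¹ • ∑ i, Measure.dirac (x i)

instance isProbabilityMeasure_empiricalMeasure [NeZero N] (x : Fin N → α) :
    IsProbabilityMeasure (empiricalMeasure x) where
  measure_univ := by
    simp [empiricalMeasure, ENNReal.inv_mul_cancel, NeZero.ne N]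

theorem integral_empiricalMeasure [MeasurableSingletonClass α] {E : Type*} [NormedAddCommGroup E]
    [NormedSpace ℝ E] [CompleteSpace E] (x : Fin N → α) (f : α → E) :
    ∫ a, f a ∂empiricalMeasure x = (N : ℝ)⁻¹ • ∑ i, f (x i) := by
  rw [empiricalMeasure, integral_smul_measure,
    integral_finsetSum_measure fun i _ => integrable_dirac enorm_lt_top]
  simp

end EmpiricalMeasure

theorem framePotential_add_natCast {d N : ℕ} (p : ℝ)
    (x : Fin N → Metric.sphere (0 : EuclideanSpace ℝ (Fin d)) 1) :
    framePotential d N p (fun i => x i) + N =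
      (N : ℝ) ^ 2 * probFramePotential d p (empiricalMeasure x) := by
  have hdiag (k : Fin N) :
      (∑ l, if k ≠ l then |⟪(x k : EuclideanSpace ℝ (Fin d)), x l⟫| ^ p else 0) + 1 =
        ∑ l, |⟪(x k : EuclideanSpace ℝ (Fin d)), x l⟫| ^ p := by
    have hself : |⟪(x k : EuclideanSpace ℝ (Fin d)), x k⟫| ^ p = 1 := by simp
    rw [← Finset.sum_filter, Finset.filter_ne, ← Finset.sum_erase_add _ _ (Finset.mem_univ k),
      hself]
  have hdouble : framePotential d N p (fun i => x i) + N =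
      ∑ k, ∑ l, |⟪(x k : EuclideanSpace ℝ (Fin d)), x l⟫| ^ p := by
    simp [framePotential, ← hdiag, Finset.sum_add_distrib]
  rw [hdouble, probFramePotential]
  simp_rw [integral_empiricalMeasure, ← Finset.smul_sum, smul_eq_mul]
  rcases eq_or_ne N 0 with rfl | hN
  · simp
  · field_simp

/-- The unit sphere of `EuclideanSpace ℝ (Fin 2)` as the unit circle of `ℂ`, through
`(a, b) ↦ a + b i`. -/
noncomputable def planeSphereHomeomorphCircle :
    Metric.sphere (0 : EuclideanSpace ℝ (Fin 2)) 1 ≃ₜ Circle :=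
  Complex.orthonormalBasisOneI.repr.symm.toHomeomorph.subtype fun x => by
    rw [mem_sphere_zero_iff_norm, LinearIsometryEquiv.coe_toHomeomorph,
      ← Complex.orthonormalBasisOneI.repr.symm.norm_map]
    exact mem_sphere_zero_iff_norm.symm

theorem inner_eq_re_div_planeSphereHomeomorphCircle
    (x y : Metric.sphere (0 : EuclideanSpace ℝ (Fin 2)) 1) :
    ⟪(x : EuclideanSpace ℝ (Fin 2)), y⟫ =
      ((planeSphereHomeomorphCircle x / planeSphereHomeomorphCircle y : Circle) : ℂ).re := by
  rw [real_inner_comm, ← Complex.orthonormalBasisOneI.repr.symm.inner_map_map, Complex.inner,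
    div_eq_mul_inv, Circle.coe_mul, Circle.coe_inv_eq_conj]
  rfl

theorem re_pow_two_mul_eq_sum_zpow (m : ℕ) (z : Circle) :
    (((z : ℂ).re ^ (2 * m) : ℝ) : ℂ) = ∑ k ∈ Finset.range (2 * m + 1),
      (((2 * m).choose k / 4 ^ m : ℝ) : ℂ) * (z : ℂ) ^ (2 * ((k : ℤ) - m)) := by
  have hre : ((z : ℂ).re : ℂ) = (z + (z : ℂ)⁻¹) / 2 := by
    rw [Complex.re_eq_add_conj, ← Circle.coe_inv_eq_conj, Circle.coe_inv]
  rw [Complex.ofReal_pow, hre, div_pow, add_pow, Finset.sum_div]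
  refine Finset.sum_congr rfl fun k hk => ?_
  have hexp : (2 * ((k : ℤ) - m)) = k + -((2 * m - k : ℕ) : ℤ) := by
    have := Finset.mem_range_succ_iff.1 hk
    omega
  rw [hexp, zpow_add₀ z.coe_ne_zero, zpow_neg, zpow_natCast, zpow_natCast, inv_pow, pow_mul]
  push_cast
  norm_num
  ring

section AngularMoment

open ComplexConjugate

theorem abs_inner_pow_two_mul_eq_sum (m : ℕ)
    (x y : Metric.sphere (0 : EuclideanSpace ℝ (Fin 2)) 1) :
    ((|⟪(x : EuclideanSpace ℝ (Fin 2)), y⟫| ^ (2 * m) : ℝ) : ℂ) =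
      ∑ k ∈ Finset.range (2 * m + 1), (((2 * m).choose k / 4 ^ m : ℝ) : ℂ) *
        ((planeSphereHomeomorphCircle x : ℂ) ^ (2 * ((k : ℤ) - m)) *
          conj ((planeSphereHomeomorphCircle y : ℂ) ^ (2 * ((k : ℤ) - m)))) := by
  rw [(even_two_mul m).pow_abs, inner_eq_re_div_planeSphereHomeomorphCircle,
    re_pow_two_mul_eq_sum_zpow]
  simp only [Circle.coe_div, div_eq_mul_inv (G := ℂ), mul_zpow, inv_zpow, map_zpow₀,
    ← Circle.coe_inv_eq_conj, Circle.coe_inv]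

/-- The `n`-th trigonometric moment `∫ exp(i n θ) dμ` of a measure on the unit circle of the
plane, `θ` being the angle of a point. -/
noncomputable def angularMoment (μ : Measure (Metric.sphere (0 : EuclideanSpace ℝ (Fin 2)) 1))
    (n : ℤ) : ℂ :=
  ∫ x, (planeSphereHomeomorphCircle x : ℂ) ^ n ∂μ

variable {μ : Measure (Metric.sphere (0 : EuclideanSpace ℝ (Fin 2)) 1)}

theorem angularMoment_zero : angularMoment μ 0 = μ.real Set.univ := by
  simp [angularMoment]

theorem integrable_planeSphereHomeomorphCircle_zpow [IsFiniteMeasure μ] (n : ℤ) :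
    Integrable (fun x => (planeSphereHomeomorphCircle x : ℂ) ^ n) μ := by
  have hcont : Continuous fun x => ((planeSphereHomeomorphCircle x ^ n : Circle) : ℂ) :=
    continuous_subtype_val.comp (planeSphereHomeomorphCircle.continuous.zpow n)
  exact .of_bound (C := 1) hcont.aestronglyMeasurable
    (.of_forall fun x => (Circle.norm_coe (planeSphereHomeomorphCircle x ^ n)).le)

theorem probFramePotential_two_eq_sum_norm_angularMoment_sq [IsFiniteMeasure μ] (m : ℕ) :
    probFramePotential 2 (2 * m : ℕ) μ = ∑ k ∈ Finset.range (2 * m + 1),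
      ((2 * m).choose k / 4 ^ m : ℝ) * ‖angularMoment μ (2 * ((k : ℤ) - m))‖ ^ 2 := by
  have hint (n : ℤ) := integrable_planeSphereHomeomorphCircle_zpow (μ := μ) n
  have hint_conj (n : ℤ) :
      Integrable (fun x => conj ((planeSphereHomeomorphCircle x : ℂ) ^ n)) μ :=
    Complex.conjCLE.toContinuousLinearMap.integrable_comp (hint n)
  have hinner (x : Metric.sphere (0 : EuclideanSpace ℝ (Fin 2)) 1) :
      ((∫ y, |⟪(x : EuclideanSpace ℝ (Fin 2)), y⟫| ^ (2 * m) ∂μ : ℝ) : ℂ) =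
        ∑ k ∈ Finset.range (2 * m + 1), (((2 * m).choose k / 4 ^ m : ℝ) : ℂ) *
          ((planeSphereHomeomorphCircle x : ℂ) ^ (2 * ((k : ℤ) - m)) *
            conj (angularMoment μ (2 * ((k : ℤ) - m)))) := by
    simp_rw [← integral_complex_ofReal, abs_inner_pow_two_mul_eq_sum]
    rw [integral_finsetSum _ fun k _ => ((hint_conj _).const_mul _).const_mul _]
    simp_rw [integral_const_mul, integral_conj, angularMoment]
  apply Complex.ofReal_injective
  simp_rw [probFramePotential, Real.rpow_natCast]
  rw [← integral_complex_ofReal]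
  simp_rw [hinner]
  rw [integral_finsetSum _ fun k _ => ((hint _).mul_const _).const_mul _]
  push_cast
  refine Finset.sum_congr rfl fun k _ => ?_
  rw [integral_const_mul, integral_mul_const, ← angularMoment, Complex.mul_conj']

theorem centralBinom_mul_measureReal_univ_sq_le_probFramePotential_two [IsFiniteMeasure μ]
    (m : ℕ) :
    (m.centralBinom : ℝ) / 4 ^ m * μ.real Set.univ ^ 2 ≤ probFramePotential 2 (2 * m : ℕ) μ := by
  rw [probFramePotential_two_eq_sum_norm_angularMoment_sq]
  refine le_of_eq_of_le ?_ (Finset.single_le_sum (fun k _ => by positivity)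
    (Finset.mem_range.2 (by omega : m < 2 * m + 1)))
  simp [angularMoment_zero, Nat.centralBinom]

theorem probFramePotential_two_eq_of_angularMoment_eq_zero [IsFiniteMeasure μ] {m : ℕ}
    (hμ : ∀ n : ℤ, n ≠ 0 → |n| ≤ m → angularMoment μ (2 * n) = 0) :
    probFramePotential 2 (2 * m : ℕ) μ =
      (m.centralBinom : ℝ) / 4 ^ m * μ.real Set.univ ^ 2 := by
  rw [probFramePotential_two_eq_sum_norm_angularMoment_sq, Finset.sum_eq_single_of_mem m
    (Finset.mem_range.2 (by omega))]
  · simp [angularMoment_zero, Nat.centralBinom]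
  · intro k hk hkm
    rw [Finset.mem_range] at hk
    rw [hμ _ (by omega) (abs_le.2 (by omega))]
    simp

end AngularMoment

/-- The `N` points of the plane at the angles `π i / N`, `0 ≤ i < N`. They fill only half of the
circle because even potentials do not distinguish `x` from `-x`. -/
noncomputable def halfCirclePoints (N : ℕ) :
    Fin N → Metric.sphere (0 : EuclideanSpace ℝ (Fin 2)) 1 :=
  fun i => planeSphereHomeomorphCircle.symm (Circle.exp (π * i / N))

theorem angularMoment_empiricalMeasure_halfCirclePoints {N : ℕ} {n : ℤ} (hn : ¬ (N : ℤ) ∣ n) :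
    angularMoment (empiricalMeasure (halfCirclePoints N)) (2 * n) = 0 := by
  rcases eq_or_ne N 0 with rfl | hN
  · simp [angularMoment, integral_empiricalMeasure]
  have hpow (i : Fin N) : (planeSphereHomeomorphCircle (halfCirclePoints N i) : ℂ) ^ (2 * n) =
      (Complex.exp (2 * π * Complex.I / N) ^ n) ^ (i : ℕ) := by
    simp only [halfCirclePoints, Homeomorph.apply_symm_apply, Circle.coe_exp,
      ← Complex.exp_int_mul, ← Complex.exp_nat_mul]
    push_cast
    ring_nf
  simp_rw [angularMoment, integral_empiricalMeasure, hpow]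
  rw [Fin.sum_univ_eq_sum_range, sum_zpow_pow_eq_zero_of_isPrimitiveRoot
    (Complex.isPrimitiveRoot_exp N hN) hn, smul_zero]

theorem probFramePotential_two_empiricalMeasure_halfCirclePoints {m N : ℕ} (hmN : m < N) :
    probFramePotential 2 (2 * m : ℕ) (empiricalMeasure (halfCirclePoints N)) =
      (m.centralBinom : ℝ) / 4 ^ m := by
  have : NeZero N := ⟨by omega⟩
  rw [probFramePotential_two_eq_of_angularMoment_eq_zero, probReal_univ, one_pow, mul_one]
  refine fun n hn hnm => angularMoment_empiricalMeasure_halfCirclePoints fun hdvd => hn ?_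
  exact Int.eq_zero_of_abs_lt_dvd hdvd (by omega)

theorem minProbFramePotential_two_two_mul (m : ℕ) :
    minProbFramePotential 2 (2 * m : ℕ) = (m.centralBinom : ℝ) / 4 ^ m := by
  refine IsLeast.csInf_eq ⟨?_, ?_⟩
  · exact ⟨empiricalMeasure (halfCirclePoints (m + 1)), inferInstance,
      (probFramePotential_two_empiricalMeasure_halfCirclePoints m.lt_succ_self).symm⟩
  · rintro _ ⟨μ, hμ, rfl⟩
    simpa using centralBinom_mul_measureReal_univ_sq_le_probFramePotential_two (μ := μ) m

theorem minFramePotential_two_two_mul {m N : ℕ} (hmN : m < N) :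
    minFramePotential 2 N (2 * m : ℕ) = (m.centralBinom : ℝ) / 4 ^ m * N ^ 2 - N := by
  have : NeZero N := ⟨by omega⟩
  refine IsLeast.csInf_eq ⟨?_, ?_⟩
  · refine ⟨fun i => halfCirclePoints N i, fun i => by simp, ?_⟩
    rw [eq_sub_iff_add_eq, framePotential_add_natCast,
      probFramePotential_two_empiricalMeasure_halfCirclePoints hmN, mul_comm]
  · rintro _ ⟨X, hX, rfl⟩
    let x (i : Fin N) : Metric.sphere (0 : EuclideanSpace ℝ (Fin 2)) 1 := ⟨X i, by simp [hX i]⟩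
    have hlower : (m.centralBinom : ℝ) / 4 ^ m ≤
        probFramePotential 2 (2 * m : ℕ) (empiricalMeasure x) := by
      simpa using
        centralBinom_mul_measureReal_univ_sq_le_probFramePotential_two (μ := empiricalMeasure x) m
    rw [sub_le_iff_le_add, framePotential_add_natCast _ x, mul_comm]
    gcongr

/-- For `d = 2` and `p` an even integer,
`lim_{N→∞} F_{p,N,2}/N² = P_{p,2} = (1·3·5⋯(p−1))/(2·4·6⋯p)`. -/
theorem tendsto_minFramePotential_div_sq_even_dim_two
    (p : ℕ) (hp2 : 2 ≤ p) (hpe : Even p) :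
    Filter.Tendsto (fun N : ℕ => minFramePotential 2 N (p : ℝ) / (N : ℝ) ^ 2)
      Filter.atTop
      (nhds (∏ i ∈ Finset.range (p / 2), ((2 * (i : ℝ) + 1) / (2 * (i : ℝ) + 2)))) ∧
    minProbFramePotential 2 (p : ℝ) =
      ∏ i ∈ Finset.range (p / 2), ((2 * (i : ℝ) + 1) / (2 * (i : ℝ) + 2)) := by
  obtain ⟨m, rfl⟩ := hpe.two_dvd
  rw [Nat.mul_div_cancel_left m two_pos, ← centralBinom_div_four_pow_eq_prod]
  refine ⟨?_, minProbFramePotential_two_two_mul m⟩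
  have hlim : Filter.Tendsto (fun N : ℕ => (m.centralBinom : ℝ) / 4 ^ m - 1 / (N : ℝ))
      Filter.atTop (nhds ((m.centralBinom : ℝ) / 4 ^ m)) := by
    simpa using
      (tendsto_const_nhds (x := (m.centralBinom : ℝ) / 4 ^ m)).sub
        (tendsto_one_div_atTop_nhds_zero_nat (𝕜 := ℝ))
  refine hlim.congr' ?_
  filter_upwards [Filter.eventually_gt_atTop m] with N hmN
  have hN : (N : ℝ) ≠ 0 := Nat.cast_ne_zero.2 (by omega)
  rw [minFramePotential_two_two_mul hmN]
  field_simp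
end
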